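/- Let K be a finite symmetric generating set of F̃ (K = K⁻¹ and K generates F̃ as a group), and let μ_K be the uniform probability measure on K. Then the simple random walk on the Cayley graph of F̃ determined by K is not Liouville: there exists a bounded, non-constant μ_K-harmonic function f : F̃ → ℝ. -/

import Mathlib

noncomputable section

/-- The generator `Ã : γ ↦ γ - 1` as a permutation of `ℝ`. -/
def Atil : Equiv.Perm ℝ := Equiv.subRight (1 : ℝ)

/-- The underlying function of the generator `B̃`. -/
def Bfun : ℝ → ℝ := fun x => if x ≤ 0 then x else if x ≤ 2 then x / 2 else x - 1

/-- The underlying function of `B̃⁻¹`. -/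
def Binvfun : ℝ → ℝ := fun x => if x ≤ 0 then x else if x ≤ 1 then 2 * x else x + 1

/-- The generator `B̃` as a permutation of `ℝ`. -/
def Btil : Equiv.Perm ℝ where
  toFun := Bfun
  invFun := Binvfun
  left_inv := by
    intro x
    simp only [Bfun, Binvfun]
    split_ifs <;> linarith
  right_inv := by
    intro x
    simp only [Bfun, Binvfun]
    split_ifs <;> linarith

/-- Thompson's group `F` realized as the subgroup `F̃` of piecewise-linear homeomorphisms of `ℝ`
generated by `Ã` and `B̃`.  The multiplication of `Equiv.Perm ℝ` is `(f * g) x = f (g x)`;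
the paper's group operation is `(g₁ g₂)(γ) = g₂(g₁(γ))`, i.e. the paper's product `g₁·g₂`
corresponds to `g₂ * g₁` here.  As a *set* of permutations, `F̃` is the same for either
convention. -/
def Ftil : Subgroup (Equiv.Perm ℝ) := Subgroup.closure {Atil, Btil}

/-!
The ratio of the right and the left derivative is a cocycle of the action of `F̃` on `ℝ`, trivial
off a finite set for each group element. The walk on `F̃` induces one on the orbit of `0`, which is
transient: `B̃` and `B̃` followed by `Ã⁻¹` map `[0, 2)` into itself with disjoint images, so the
Schreier graph of the orbit contains a binary tree, evaluation at `0` is bounded in the energy norm,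
and finite sets have finite potential. Hence the value at `0` of the cocycle changes only finitely
often along the walk. If `u` is the indicator of one of its values and `P` the transition operator,
then `Pⁿ u` converges to a harmonic function `f`. The difference `u - f` is small where the
potential is small, and there `f` is not constant because `B̃` fixes `0` and has slope ratio `1 / 2`
at it.
-/

open Filter Function Set Topology

section MarkovOperator

lemma abs_map_le_map_of_abs_le {α β F : Type*} [AddCommGroup α] [Lattice α] [IsOrderedAddMonoid α]
    [AddCommGroup β] [Lattice β] [FunLike F α β] [AddMonoidHomClass F α β] {f : F}
    (hf : Monotone f) {a b : α} (h : |a| ≤ b) : |f a| ≤ f b :=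
  abs_le'.2 ⟨hf ((le_abs_self a).trans h), map_neg f a ▸ hf ((neg_le_abs a).trans h)⟩

variable {G X Y : Type*} [SMul G X] [SMul G Y] {K : Finset G} {p : G → ℝ}

variable (K p) in
/-- The transition operator of the random walk on `X` that moves `x` to `h • x` with probability
`p h`, for `h ∈ K`. On `X = G` its fixed points are the harmonic functions. -/
def markovOp : Module.End ℝ (X → ℝ) := ∑ h ∈ K, p h • LinearMap.funLeft ℝ ℝ (h • ·)

lemma markovOp_apply (v : X → ℝ) (x : X) : markovOp K p v x = ∑ h ∈ K, p h * v (h • x) := by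
  simp [markovOp, LinearMap.funLeft_apply]

lemma monotone_markovOp (hp : ∀ h ∈ K, 0 ≤ p h) : Monotone (markovOp K p (X := X)) := by
  intro v w hvw x
  simp only [markovOp_apply]
  gcongr with h hh
  exacts [hp h hh, hvw _]

lemma monotone_markovOp_pow (hp : ∀ h ∈ K, 0 ≤ p h) (n : ℕ) :
    Monotone (markovOp K p (X := X) ^ n) := by
  rw [Module.End.coe_pow]
  exact (monotone_markovOp hp).iterate n

lemma markovOp_pow_nonneg (hp : ∀ h ∈ K, 0 ≤ p h) {v : X → ℝ} (hv : 0 ≤ v) (n : ℕ) :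
    0 ≤ (markovOp K p ^ n) v :=
  map_zero (markovOp K p (X := X) ^ n) ▸ monotone_markovOp_pow hp n hv

lemma markovOp_const (hp_sum : ∑ h ∈ K, p h = 1) (c : ℝ) :
    markovOp K p (const X c) = const X c := by
  ext x
  simp [markovOp_apply, ← Finset.sum_mul, hp_sum]

lemma markovOp_pow_const (hp_sum : ∑ h ∈ K, p h = 1) (c : ℝ) (n : ℕ) :
    (markovOp K p ^ n) (const X c) = const X c := by
  rw [Module.End.coe_pow]
  exact iterate_fixed (markovOp_const hp_sum c) n

lemma markovOp_pow_comp (f : Y →[G] X) (v : X → ℝ) (n : ℕ) :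
    (markovOp K p ^ n) (v ∘ f) = (markovOp K p ^ n) v ∘ f := by
  induction n with
  | zero => rfl
  | succ n ih =>
    ext y
    simp [pow_succ', ih, markovOp_apply]

lemma markovOp_tsum {F : ℕ → X → ℝ} (hF : ∀ x, Summable (F · x)) :
    markovOp K p (fun x ↦ ∑' n, F n x) = fun x ↦ ∑' n, markovOp K p (F n) x := by
  ext x
  simp only [markovOp_apply, ← tsum_mul_left]
  exact (Summable.tsum_finsetSum fun h _ ↦ (hF _).mul_left _).symm

lemma markovOp_eq_self_of_tendsto_pow {u f : X → ℝ}
    (hf : ∀ x, Tendsto (fun n ↦ (markovOp K p ^ n) u x) atTop (𝓝 (f x))) :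
    markovOp K p f = f := by
  ext x
  refine tendsto_nhds_unique ?_ ((tendsto_add_atTop_iff_nat 1).2 (hf x))
  simp only [pow_succ', Module.End.mul_apply, markovOp_apply]
  exact tendsto_finsetSum K fun h _ ↦ (hf (h • x)).const_mul _

/-- The harmonic function is the pointwise limit of `Pⁿ u`. -/
theorem exists_markovOp_eq_self_of_abs_sub_le (hp : ∀ h ∈ K, 0 ≤ p h) (hp_sum : ∑ h ∈ K, p h = 1)
    {u w : X → ℝ} {c : ℝ} (hu : |u| ≤ const X c) (huw : |u - markovOp K p u| ≤ w)
    (hw : ∀ x, Summable fun n ↦ (markovOp K p ^ n) w x) :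
    ∃ f : X → ℝ, markovOp K p f = f ∧ |f| ≤ const X c ∧
      ∀ x, |u x - f x| ≤ ∑' n, (markovOp K p ^ n) w x := by
  have hdist (x : X) (n : ℕ) : dist ((markovOp K p ^ n) u x) ((markovOp K p ^ (n + 1)) u x) ≤
      (markovOp K p ^ n) w x := by
    rw [Real.dist_eq, pow_succ, Module.End.mul_apply]
    simpa [map_sub] using abs_map_le_map_of_abs_le (monotone_markovOp_pow hp n) huw x
  choose f hf using fun x ↦
    cauchySeq_tendsto_of_complete (cauchySeq_of_dist_le_of_summable _ (hdist x) (hw x))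
  refine ⟨f, markovOp_eq_self_of_tendsto_pow hf, fun x ↦ ?_, fun x ↦ ?_⟩
  · refine le_of_tendsto' (hf x).abs fun n ↦ ?_
    exact (abs_map_le_map_of_abs_le (monotone_markovOp_pow hp n) hu x).trans_eq
      (congrFun (markovOp_pow_const hp_sum c n) x)
  · simpa [Real.dist_eq] using dist_le_tsum_of_dist_le_of_tendsto₀ _ (hdist x) (hw x) (hf x)

/-- A positive lower bound of a potential would persist under the operator, which however sends
the potential to its tails. -/
theorem exists_tsum_markovOp_pow_lt [Nonempty X] (hp : ∀ h ∈ K, 0 ≤ p h)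
    (hp_sum : ∑ h ∈ K, p h = 1) {w : X → ℝ}
    (hw : ∀ x, Summable fun n ↦ (markovOp K p ^ n) w x) {ε : ℝ} (hε : 0 < ε) :
    ∃ x, ∑' n, (markovOp K p ^ n) w x < ε := by
  by_contra! hle
  have tail_ge (m : ℕ) : const X ε ≤ fun x ↦ ∑' n, (markovOp K p ^ (n + m)) w x := by
    induction m with
    | zero => exact hle
    | succ m ih =>
      calc const X ε = markovOp K p (const X ε) := (markovOp_const hp_sum ε).symm
        _ ≤ markovOp K p fun x ↦ ∑' n, (markovOp K p ^ (n + m)) w x := monotone_markovOp hp ih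
        _ = fun x ↦ ∑' n, (markovOp K p ^ (n + (m + 1))) w x := by
          rw [markovOp_tsum fun x ↦ (summable_nat_add_iff m).2 (hw x)]
          simp only [← add_assoc, pow_succ', Module.End.mul_apply]
  obtain ⟨x⟩ := ‹Nonempty X›
  exact hε.not_ge <|
    ge_of_tendsto' (tendsto_sum_nat_add fun n ↦ (markovOp K p ^ n) w x) fun m ↦ tail_ge m x

lemma abs_sub_markovOp_le_indicator (hp : ∀ h ∈ K, 0 ≤ p h) (hp_sum : ∑ h ∈ K, p h = 1)
    {u : X → ℝ} (hu0 : 0 ≤ u) (hu1 : u ≤ 1) {D : Set X}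
    (hD : ∀ x ∉ D, ∀ h ∈ K, u (h • x) = u x) : |u - markovOp K p u| ≤ D.indicator 1 := by
  intro x
  simp only [Pi.abs_apply, Pi.sub_apply]
  by_cases hx : x ∈ D
  · have hPu0 : 0 ≤ markovOp K p u x := markovOp_pow_nonneg hp hu0 1 x
    have hPu1 : markovOp K p u x ≤ 1 :=
      (monotone_markovOp hp hu1 x).trans_eq (congrFun (markovOp_const hp_sum 1) x)
    simpa [hx] using abs_sub_le_of_nonneg_of_le (hu0 x) (hu1 x) hPu0 hPu1
  · have hPu : markovOp K p u x = u x := by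
      rw [markovOp_apply, Finset.sum_congr rfl fun h hh ↦ by rw [hD x hx h hh],
        ← Finset.sum_mul, hp_sum, one_mul]
    simp [hx, hPu]

end MarkovOperator

section DirichletForm

variable {G X : Type*} [Group G] [MulAction G X] {K : Finset G} {p : G → ℝ} {v : X → ℝ}

/-- The Dirichlet form of the bijection `x ↦ g • x`. It is meant for finitely supported `v`; for
other `v` the sum may be the junk value `0`. -/
def dirichletForm (g : G) (v : X → ℝ) : ℝ := ∑' x, (v (g • x) - v x) ^ 2

lemma dirichletForm_nonneg (g : G) (v : X → ℝ) : 0 ≤ dirichletForm g v :=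
  tsum_nonneg fun _ ↦ sq_nonneg _

lemma hasFiniteSupport_comp_smul (hv : v.HasFiniteSupport) (g : G) :
    (fun x ↦ v (g • x)).HasFiniteSupport :=
  hv.fun_comp_of_injective (MulAction.injective g)

lemma summable_dirichletForm (hv : v.HasFiniteSupport) (g : G) :
    Summable fun x ↦ (v (g • x) - v x) ^ 2 :=
  summable_of_hasFiniteSupport <|
    ((hasFiniteSupport_comp_smul hv g).sub hv).fun_comp (zero_pow two_ne_zero)

lemma sum_sq_sub_le_dirichletForm (hv : v.HasFiniteSupport) (g : G) (s : Finset X) :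
    ∑ x ∈ s, (v (g • x) - v x) ^ 2 ≤ dirichletForm g v :=
  (summable_dirichletForm hv g).sum_le_tsum s fun _ _ ↦ sq_nonneg _

lemma abs_sub_le_sqrt_dirichletForm (hv : v.HasFiniteSupport) (g : G) (x : X) :
    |v (g • x) - v x| ≤ √(dirichletForm g v) :=
  Real.abs_le_sqrt <| by simpa using sum_sq_sub_le_dirichletForm hv g {x}

lemma dirichletForm_one (v : X → ℝ) : dirichletForm (1 : G) v = 0 := by
  simp [dirichletForm]

lemma dirichletForm_inv (g : G) (v : X → ℝ) : dirichletForm g⁻¹ v = dirichletForm g v := by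
  rw [dirichletForm, ← (MulAction.toPerm g).tsum_eq]
  exact tsum_congr fun x ↦ by rw [MulAction.toPerm_apply, inv_smul_smul, sub_sq_comm]

lemma dirichletForm_mul_le (hv : v.HasFiniteSupport) (h g : G) :
    dirichletForm (h * g) v ≤ 2 * (dirichletForm h v + dirichletForm g v) := by
  have hh : dirichletForm h v = ∑' x, (v (h • g • x) - v (g • x)) ^ 2 :=
    ((MulAction.toPerm g).tsum_eq fun x ↦ (v (h • x) - v x) ^ 2).symm
  have hh_summable : Summable fun x ↦ (v (h • g • x) - v (g • x)) ^ 2 :=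
    (summable_dirichletForm hv h).comp_injective (MulAction.injective g)
  have hg_summable := summable_dirichletForm hv g
  rw [hh, dirichletForm, dirichletForm, ← hh_summable.tsum_add hg_summable, ← tsum_mul_left]
  refine (summable_dirichletForm hv (h * g)).tsum_le_tsum (fun x ↦ ?_)
    ((hh_summable.add hg_summable).mul_left 2)
  rw [mul_smul, ← sub_add_sub_cancel (v (h • g • x)) (v (g • x))]
  exact add_sq_le

lemma dirichletForm_eq_tsum (hv : v.HasFiniteSupport) (g : G) :
    dirichletForm g v = 2 * ∑' x, v x * (v x - v (g • x)) := by
  have hsq : Summable fun x ↦ v x ^ 2 :=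
    summable_of_hasFiniteSupport (hv.fun_comp (zero_pow two_ne_zero))
  have hsq_smul : Summable fun x ↦ v (g • x) ^ 2 :=
    hsq.comp_injective (MulAction.injective g)
  have hmul : Summable fun x ↦ v x * (v x - v (g • x)) :=
    summable_of_hasFiniteSupport (hv.subset (support_mul_subset_left _ _))
  have htsum : ∑' x, v (g • x) ^ 2 = ∑' x, v x ^ 2 :=
    (MulAction.toPerm g).tsum_eq fun x ↦ v x ^ 2
  calc dirichletForm g v
      = ∑' x, (v (g • x) ^ 2 - v x ^ 2 + 2 * (v x * (v x - v (g • x)))) :=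
        tsum_congr fun x ↦ by ring
    _ = 2 * ∑' x, v x * (v x - v (g • x)) := by
        rw [(hsq_smul.sub hsq).tsum_add (hmul.mul_left 2), hsq_smul.tsum_sub hsq, htsum,
          sub_self, zero_add, tsum_mul_left]

variable (K p) in
/-- The Dirichlet energy of `v` for the random walk on `X` with step weights `p` on `K`. -/
def energy (v : X → ℝ) : ℝ := ∑ h ∈ K, p h * dirichletForm h v

lemma energy_nonneg (hp : ∀ h ∈ K, 0 ≤ p h) (v : X → ℝ) : 0 ≤ energy K p v :=
  Finset.sum_nonneg fun h hh ↦ mul_nonneg (hp h hh) (dirichletForm_nonneg h v)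

lemma energy_eq_tsum (hp_sum : ∑ h ∈ K, p h = 1) (hv : v.HasFiniteSupport) :
    energy K p v = 2 * ∑' x, v x * (v x - markovOp K p v x) := by
  have hmul (h : G) : Summable fun x ↦ v x * (v x - v (h • x)) :=
    summable_of_hasFiniteSupport (hv.subset (support_mul_subset_left _ _))
  calc energy K p v = 2 * ∑ h ∈ K, ∑' x, p h * (v x * (v x - v (h • x))) := by
        simp only [energy, dirichletForm_eq_tsum hv, tsum_mul_left, mul_left_comm (p _) 2,
          Finset.mul_sum]
    _ = 2 * ∑' x, ∑ h ∈ K, p h * (v x * (v x - v (h • x))) := by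
        rw [Summable.tsum_finsetSum fun h _ ↦ (hmul h).mul_left _]
    _ = 2 * ∑' x, v x * (v x - markovOp K p v x) := by
        simp only [mul_left_comm (p _), ← Finset.mul_sum, mul_sub (p _), Finset.sum_sub_distrib,
          ← Finset.sum_mul, hp_sum, one_mul, markovOp_apply]

lemma exists_dirichletForm_le_energy (hp : ∀ h ∈ K, 0 < p h) {g : G}
    (hg : g ∈ Subgroup.closure (K : Set G)) :
    ∃ C, ∀ v : X → ℝ, v.HasFiniteSupport → dirichletForm g v ≤ C * energy K p v := by
  induction hg using Subgroup.closure_induction with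
  | mem g hg =>
    refine ⟨(p g)⁻¹, fun v _ ↦ ?_⟩
    rw [le_inv_mul_iff₀ (hp g hg)]
    exact Finset.single_le_sum (f := fun h ↦ p h * dirichletForm h v)
      (fun h hh ↦ mul_nonneg (hp h hh).le (dirichletForm_nonneg h v)) hg
  | one => exact ⟨0, fun v _ ↦ by simp [dirichletForm_one]⟩
  | mul h g _ _ ihh ihg =>
    obtain ⟨C, hC⟩ := ihh
    obtain ⟨D, hD⟩ := ihg
    exact ⟨2 * (C + D), fun v hv ↦ by linarith [dirichletForm_mul_le hv h g, hC v hv, hD v hv]⟩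
  | inv g _ ih => simpa only [dirichletForm_inv] using ih

lemma exists_sqrt_dirichletForm_le_sqrt_energy (hp : ∀ h ∈ K, 0 < p h) {g : G}
    (hg : g ∈ Subgroup.closure (K : Set G)) :
    ∃ C, ∀ v : X → ℝ, v.HasFiniteSupport → √(dirichletForm g v) ≤ C * √(energy K p v) := by
  obtain ⟨C, hC⟩ := exists_dirichletForm_le_energy (X := X) hp hg
  refine ⟨√C, fun v hv ↦ ?_⟩
  rw [← Real.sqrt_mul' _ (energy_nonneg (fun h hh ↦ (hp h hh).le) v)]
  exact Real.sqrt_le_sqrt (hC v hv)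

end DirichletForm

section Capacity

variable {G X : Type*} [Group G] [MulAction G X] {K : Finset G} {p : G → ℝ} {x y : X}

variable (K p) in
/-- Evaluation at `x` is bounded in the energy norm on finitely supported functions, i.e. the
capacity `inf {energy K p v | v x = 1}` of `x` is positive. -/
def HasPositiveCapacity (x : X) : Prop :=
  ∃ C, ∀ v : X → ℝ, v.HasFiniteSupport → |v x| ≤ C * √(energy K p v)

lemma HasPositiveCapacity.of_mem_orbit (hp : ∀ h ∈ K, 0 < p h)
    (hgen : Subgroup.closure (K : Set G) = ⊤) (hx : HasPositiveCapacity K p x)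
    (hy : y ∈ MulAction.orbit G x) : HasPositiveCapacity K p y := by
  obtain ⟨g, rfl⟩ := hy
  obtain ⟨C, hC⟩ := hx
  obtain ⟨D, hD⟩ := exists_sqrt_dirichletForm_le_sqrt_energy (X := X) hp
    (hgen ▸ Subgroup.mem_top g : g ∈ Subgroup.closure (K : Set G))
  refine ⟨C + D, fun v hv ↦ ?_⟩
  linarith [abs_sub_le_iff.1 (abs_abs_sub_abs_le (v (g • x)) (v x)),
    abs_sub_le_sqrt_dirichletForm hv g x, hC v hv, hD v hv]

lemma hasFiniteSupport_markovOp {v : X → ℝ} (hv : v.HasFiniteSupport) :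
    (markovOp K p v).HasFiniteSupport := by
  refine (K.finite_toSet.biUnion fun h _ ↦ hasFiniteSupport_comp_smul hv h).subset fun x hx ↦ ?_
  rw [mem_support, markovOp_apply] at hx
  obtain ⟨h, hh, hne⟩ := Finset.exists_ne_zero_of_sum_ne_zero hx
  exact mem_biUnion hh (right_ne_zero_of_mul hne)

lemma hasFiniteSupport_markovOp_pow {v : X → ℝ} (hv : v.HasFiniteSupport) (n : ℕ) :
    ((markovOp K p ^ n) v).HasFiniteSupport := by
  induction n with
  | zero => exact hv
  | succ n ih =>
    rw [pow_succ']
    exact hasFiniteSupport_markovOp ih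

lemma hasFiniteSupport_sum_markovOp_pow {v : X → ℝ} (hv : v.HasFiniteSupport) (N : ℕ) :
    (∑ n ∈ Finset.range N, (markovOp K p ^ n) v).HasFiniteSupport :=
  Finset.sum_induction _ (fun f : X → ℝ ↦ f.HasFiniteSupport) (fun _ _ hf hg ↦ hf.add hg)
    hasFiniteSupport_fun_zero fun n _ ↦ hasFiniteSupport_markovOp_pow hv n

/-- If `V` is a partial sum of the potential of `w`, then `V - PV ≤ w`. -/
lemma energy_sum_markovOp_pow_le (hp : ∀ h ∈ K, 0 ≤ p h) (hp_sum : ∑ h ∈ K, p h = 1) {w : X → ℝ}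
    (hw : w.HasFiniteSupport) (hw0 : 0 ≤ w) (N : ℕ) :
    energy K p (∑ n ∈ Finset.range N, (markovOp K p ^ n) w) ≤
      2 * ∑' x, (∑ n ∈ Finset.range N, (markovOp K p ^ n) w) x * w x := by
  set V := ∑ n ∈ Finset.range N, (markovOp K p ^ n) w with hV
  have hV_fin : V.HasFiniteSupport := hasFiniteSupport_sum_markovOp_pow hw N
  have hV0 : 0 ≤ V := Finset.sum_nonneg fun n _ ↦ markovOp_pow_nonneg hp hw0 n
  have hmul (u : X → ℝ) : Summable fun x ↦ V x * u x :=
    summable_of_hasFiniteSupport (hV_fin.subset (support_mul_subset_left _ _))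
  have hV_sub : V - markovOp K p V = w - (markovOp K p ^ N) w := by
    simp only [hV, map_sum, ← Module.End.mul_apply, ← pow_succ']
    exact (Finset.sum_sub_distrib ..).symm.trans
      (Finset.sum_range_sub' (fun n ↦ (markovOp K p ^ n) w) N)
  rw [energy_eq_tsum hp_sum hV_fin]
  gcongr 2 * ?_
  refine (hmul (V - markovOp K p V)).tsum_le_tsum (fun x ↦ ?_) (hmul w)
  gcongr
  · exact hV0 x
  · exact (congrFun hV_sub x).trans_le (sub_le_self _ (markovOp_pow_nonneg hp hw0 N x))

/-- The energy of a partial sum `V` of the potential is at most `2 ∑ V w`, hence at most a fixed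
multiple of its own square root, and so stays bounded. -/
theorem HasPositiveCapacity.summable_markovOp_pow (hp : ∀ h ∈ K, 0 ≤ p h)
    (hp_sum : ∑ h ∈ K, p h = 1) {w : X → ℝ} (hw : w.HasFiniteSupport) (hw0 : 0 ≤ w)
    (hcap : ∀ x ∈ w.support, HasPositiveCapacity K p x) (hy : HasPositiveCapacity K p y) :
    Summable fun n ↦ (markovOp K p ^ n) w y := by
  choose! C hC using hcap
  obtain ⟨D, hD⟩ := hy
  have hmem (x : X) : x ∈ Set.Finite.toFinset hw ↔ w x ≠ 0 := Set.Finite.mem_toFinset hw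
  set M := ∑ x ∈ hw.toFinset, C x * w x
  refine summable_of_sum_range_le (c := |D| * (2 * |M|))
    (fun n ↦ markovOp_pow_nonneg hp hw0 n y) fun N ↦ ?_
  set V := ∑ n ∈ Finset.range N, (markovOp K p ^ n) w
  have hV_fin : V.HasFiniteSupport := hasFiniteSupport_sum_markovOp_pow hw N
  have hVw : ∑' x, V x * w x ≤ M * √(energy K p V) := by
    rw [tsum_eq_sum (s := hw.toFinset) fun x hx ↦ by
      simp [show w x = 0 by simpa [hmem] using hx], Finset.sum_mul]
    refine Finset.sum_le_sum fun x hx ↦ ?_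
    rw [mul_right_comm]
    exact mul_le_mul_of_nonneg_right
      ((le_abs_self _).trans (hC x ((hmem x).1 hx) V hV_fin)) (hw0 x)
  have henergy : √(energy K p V) ≤ 2 * |M| := by
    have := energy_sum_markovOp_pow_le hp hp_sum hw hw0 N
    have := Real.sq_sqrt (energy_nonneg hp V)
    by_contra! hlt
    nlinarith [abs_nonneg M, le_abs_self M]
  calc ∑ n ∈ Finset.range N, (markovOp K p ^ n) w y = V y := (Finset.sum_apply ..).symm
    _ ≤ |D| * √(energy K p V) := (le_abs_self _).trans <| (hD V hV_fin).trans <| by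
        gcongr; exact le_abs_self D
    _ ≤ |D| * (2 * |M|) := by gcongr

/-- The walk on `G` induces the walk on the orbit of `x`, where `D` has a finite potential that is
somewhere less than `ε`. -/
theorem HasPositiveCapacity.exists_forall_abs_sub_lt (hp : ∀ h ∈ K, 0 < p h)
    (hp_sum : ∑ h ∈ K, p h = 1) (hgen : Subgroup.closure (K : Set G) = ⊤)
    (hx : HasPositiveCapacity K p x) {D : Set X} (hD : D.Finite) {ε : ℝ} (hε : 0 < ε) :
    ∃ g₀ : G, ∀ u : G → ℝ, 0 ≤ u → u ≤ 1 → (∀ g, g • x ∉ D → ∀ h ∈ K, u (h • g) = u g) →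
      ∃ f : G → ℝ, markovOp K p f = f ∧ |f| ≤ const G 1 ∧
        ∀ g, g • x = g₀ • x → |u g - f g| < ε := by
  have hp0 : ∀ h ∈ K, 0 ≤ p h := fun h hh ↦ (hp h hh).le
  let orb : G →[G] X := ⟨(· • x), fun h g ↦ mul_smul h g x⟩
  set w : X → ℝ := (D ∩ MulAction.orbit G x).indicator 1
  have hw0 : 0 ≤ w := indicator_nonneg fun _ _ ↦ zero_le_one
  have hw_fin : w.HasFiniteSupport := (hD.inter_of_left _).subset support_indicator_subset
  have hcap (y : X) (hy : y ∈ MulAction.orbit G x) : HasPositiveCapacity K p y :=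
    hx.of_mem_orbit hp hgen hy
  have hpot (g : G) : Summable fun n ↦ (markovOp K p ^ n) (w ∘ orb) g := by
    simp only [markovOp_pow_comp]
    exact (hcap (g • x) ⟨g, rfl⟩).summable_markovOp_pow hp0 hp_sum hw_fin hw0
      fun y hy ↦ hcap y (support_indicator_subset hy).2
  obtain ⟨g₀, hg₀⟩ := exists_tsum_markovOp_pow_lt hp0 hp_sum hpot hε
  refine ⟨g₀, fun u hu0 hu1 hu_smul ↦ ?_⟩
  have hu_sub : |u - markovOp K p u| ≤ w ∘ orb :=
    abs_sub_markovOp_le_indicator (D := orb ⁻¹' (D ∩ MulAction.orbit G x)) hp0 hp_sum hu0 hu1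
      fun g hg ↦ hu_smul g fun hgD ↦ hg ⟨hgD, g, rfl⟩
  obtain ⟨f, hf, hf_le, hf_dist⟩ := exists_markovOp_eq_self_of_abs_sub_le hp0 hp_sum
    ((abs_of_nonneg hu0).trans_le hu1) hu_sub hpot
  refine ⟨f, hf, hf_le, fun g hg ↦ (hf_dist g).trans_lt ?_⟩
  have horb : orb g = orb g₀ := hg
  simp only [markovOp_pow_comp, comp_apply] at hg₀ ⊢
  rwa [horb]

end Capacity

section PingPong

variable {G X : Type*} [Group G] [MulAction G X] {b c : G} {U : Set X} {x₀ : X}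

variable (b c x₀) in
open scoped Classical in
/-- The `n`-th level of the tree spanned by `x₀` under `b` and `c`: its images under the products
of `n` factors from `{b, c}`. -/
def pingPongLevel : ℕ → Finset X
  | 0 => {x₀}
  | n + 1 => (pingPongLevel n).image (b • ·) ∪ (pingPongLevel n).image (c • ·)

lemma pingPongLevel_subset (hb : MapsTo (b • ·) U U) (hc : MapsTo (c • ·) U U) (hx₀ : x₀ ∈ U)
    (n : ℕ) : (pingPongLevel b c x₀ n : Set X) ⊆ U := by
  induction n with
  | zero => simpa [pingPongLevel] using hx₀
  | succ n ih =>
    simp only [pingPongLevel, Finset.coe_union, Finset.coe_image]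
    exact union_subset ((image_mono ih).trans hb.image_subset)
      ((image_mono ih).trans hc.image_subset)

lemma sum_pingPongLevel_succ {M : Type*} [AddCommMonoid M] (hb : MapsTo (b • ·) U U)
    (hc : MapsTo (c • ·) U U) (hbc : Disjoint ((b • ·) '' U) ((c • ·) '' U)) (hx₀ : x₀ ∈ U)
    (v : X → M) (n : ℕ) :
    ∑ x ∈ pingPongLevel b c x₀ (n + 1), v x =
      ∑ x ∈ pingPongLevel b c x₀ n, (v (b • x) + v (c • x)) := by
  classical
  have hsub := pingPongLevel_subset hb hc hx₀ n
  have hdisj : Disjoint ((pingPongLevel b c x₀ n).image (b • ·))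
      ((pingPongLevel b c x₀ n).image (c • ·)) := by
    rw [← Finset.disjoint_coe, Finset.coe_image, Finset.coe_image]
    exact hbc.mono (image_mono hsub) (image_mono hsub)
  rw [pingPongLevel, Finset.sum_union hdisj, Finset.sum_image (MulAction.injective b).injOn,
    Finset.sum_image (MulAction.injective c).injOn, Finset.sum_add_distrib]

lemma card_pingPongLevel (hb : MapsTo (b • ·) U U) (hc : MapsTo (c • ·) U U)
    (hbc : Disjoint ((b • ·) '' U) ((c • ·) '' U)) (hx₀ : x₀ ∈ U) (n : ℕ) :
    (pingPongLevel b c x₀ n).card = 2 ^ n := by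
  induction n with
  | zero => rfl
  | succ n ih =>
    rw [Finset.card_eq_sum_ones, sum_pingPongLevel_succ hb hc hbc hx₀, Finset.sum_const, ih,
      smul_eq_mul, pow_succ]

lemma abs_sum_sub_le_sqrt_card_mul {v : X → ℝ} (hv : v.HasFiniteSupport) (g : G) (s : Finset X) :
    |∑ x ∈ s, (v (g • x) - v x)| ≤ √s.card * √(dirichletForm g v) := by
  rw [← Real.sqrt_mul (Nat.cast_nonneg _)]
  refine Real.abs_le_sqrt (sq_sum_le_card_mul_sum_sq.trans ?_)
  gcongr
  exact sum_sq_sub_le_dirichletForm hv g s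

lemma abs_sum_pingPongLevel_succ_sub_le (hb : MapsTo (b • ·) U U) (hc : MapsTo (c • ·) U U)
    (hbc : Disjoint ((b • ·) '' U) ((c • ·) '' U)) (hx₀ : x₀ ∈ U) {v : X → ℝ}
    (hv : v.HasFiniteSupport) (n : ℕ) :
    |∑ x ∈ pingPongLevel b c x₀ (n + 1), v x - 2 * ∑ x ∈ pingPongLevel b c x₀ n, v x| ≤
      √2 ^ n * (√(dirichletForm b v) + √(dirichletForm c v)) := by
  set L := pingPongLevel b c x₀ n
  have hsqrt : √(L.card : ℝ) = √2 ^ n := by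
    rw [card_pingPongLevel hb hc hbc hx₀, Nat.cast_pow, Nat.cast_ofNat,
      Real.sqrt_eq_iff_eq_sq (by positivity) (by positivity), pow_right_comm,
      Real.sq_sqrt zero_le_two]
  have hsplit : ∑ x ∈ pingPongLevel b c x₀ (n + 1), v x - 2 * ∑ x ∈ L, v x =
      ∑ x ∈ L, (v (b • x) - v x) + ∑ x ∈ L, (v (c • x) - v x) := by
    rw [sum_pingPongLevel_succ hb hc hbc hx₀]
    simp only [Finset.sum_add_distrib, Finset.sum_sub_distrib]
    ring
  rw [hsplit, ← hsqrt, mul_add]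
  exact (abs_add_le _ _).trans
    (add_le_add (abs_sum_sub_le_sqrt_card_mul hv b L) (abs_sum_sub_le_sqrt_card_mul hv c L))

/-- The averages of `v` over the levels of the tree start at `v x₀` and tend to `0`, and their
successive differences decay geometrically. -/
theorem exists_abs_le_sqrt_dirichletForm_of_pingPong (hb : MapsTo (b • ·) U U)
    (hc : MapsTo (c • ·) U U) (hbc : Disjoint ((b • ·) '' U) ((c • ·) '' U)) (hx₀ : x₀ ∈ U) :
    ∃ C, ∀ v : X → ℝ, v.HasFiniteSupport →
      |v x₀| ≤ C * (√(dirichletForm b v) + √(dirichletForm c v)) := by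
  refine ⟨2⁻¹ / (1 - √2 / 2), fun v hv ↦ ?_⟩
  set E := √(dirichletForm b v) + √(dirichletForm c v)
  set a : ℕ → ℝ := fun n ↦ (∑ x ∈ pingPongLevel b c x₀ n, v x) / 2 ^ n with ha
  have hdist (n : ℕ) : dist (a n) (a (n + 1)) ≤ 2⁻¹ * E * (√2 / 2) ^ n := by
    have hsub : a (n + 1) - a n = (∑ x ∈ pingPongLevel b c x₀ (n + 1), v x -
        2 * ∑ x ∈ pingPongLevel b c x₀ n, v x) / 2 ^ (n + 1) := by
      simp only [ha, pow_succ]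
      field_simp
    rw [dist_comm, Real.dist_eq, hsub, abs_div, abs_of_pos (a := (2 : ℝ) ^ (n + 1)) (by positivity)]
    calc _ ≤ √2 ^ n * E / 2 ^ (n + 1) := by
          gcongr
          exact abs_sum_pingPongLevel_succ_sub_le hb hc hbc hx₀ hv n
      _ = 2⁻¹ * E * (√2 / 2) ^ n := by
          rw [div_pow, pow_succ]
          field_simp
  have hlim : Tendsto a atTop (𝓝 0) := by
    have habs : Summable fun x ↦ |v x| := summable_of_hasFiniteSupport (hv.fun_comp abs_zero)
    refine squeeze_zero_norm (fun n ↦ ?_)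
      (tendsto_const_nhds.div_atTop (tendsto_pow_atTop_atTop_of_one_lt one_lt_two) :
        Tendsto (fun n ↦ (∑' x, |v x|) / (2 : ℝ) ^ n) atTop (𝓝 0))
    rw [Real.norm_eq_abs, abs_div, abs_of_pos (a := (2 : ℝ) ^ n) (by positivity)]
    gcongr
    exact (Finset.abs_sum_le_sum_abs _ _).trans (habs.sum_le_tsum _ fun _ _ ↦ abs_nonneg _)
  have hr : √2 / 2 < 1 := by linarith [Real.sqrt_two_lt_three_halves]
  simpa [ha, pingPongLevel, Real.dist_eq, div_mul_eq_mul_div] using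
    dist_le_of_le_geometric_of_tendsto₀ (√2 / 2) _ hr hdist hlim

theorem hasPositiveCapacity_of_pingPong {K : Finset G} {p : G → ℝ} (hp : ∀ h ∈ K, 0 < p h)
    (hgen : Subgroup.closure (K : Set G) = ⊤) (hb : MapsTo (b • ·) U U)
    (hc : MapsTo (c • ·) U U) (hbc : Disjoint ((b • ·) '' U) ((c • ·) '' U)) (hx₀ : x₀ ∈ U) :
    HasPositiveCapacity K p x₀ := by
  obtain ⟨C, hC⟩ := exists_abs_le_sqrt_dirichletForm_of_pingPong hb hc hbc hx₀
  have hmem (g : G) : g ∈ Subgroup.closure (K : Set G) := hgen ▸ Subgroup.mem_top g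
  obtain ⟨B, hB⟩ := exists_sqrt_dirichletForm_le_sqrt_energy (X := X) hp (hmem b)
  obtain ⟨D, hD⟩ := exists_sqrt_dirichletForm_le_sqrt_energy (X := X) hp (hmem c)
  refine ⟨|C| * (B + D), fun v hv ↦ ?_⟩
  calc |v x₀| ≤ C * (√(dirichletForm b v) + √(dirichletForm c v)) := hC v hv
    _ ≤ |C| * (B * √(energy K p v) + D * √(energy K p v)) := by
      gcongr
      exacts [le_abs_self C, hB v hv, hD v hv]
    _ = |C| * (B + D) * √(energy K p v) := by rw [← add_mul, mul_assoc]

end PingPong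

section Cocycle

variable {G X A : Type*} [Group G] [MulAction G X]

/-- A multiplicative cocycle of the action of `G` on `X`: a family satisfying the chain rule. -/
structure IsActionCocycle [MulOneClass A] (φ : G → X → A) : Prop where
  map_one (x : X) : φ 1 x = 1
  map_mul (h g : G) (x : X) : φ (h * g) x = φ h (g • x) * φ g x

namespace IsActionCocycle

lemma div [DivisionCommMonoid A] {φ ψ : G → X → A} (hφ : IsActionCocycle φ)
    (hψ : IsActionCocycle ψ) : IsActionCocycle (φ / ψ) where
  map_one x := by simp [hφ.map_one, hψ.map_one]
  map_mul h g x := by simp [hφ.map_mul, hψ.map_mul, mul_div_mul_comm]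

variable [Monoid A] {φ : G → X → A}

lemma isUnit (hφ : IsActionCocycle φ) (g : G) (x : X) : IsUnit (φ g x) :=
  isUnit_iff_exists.2 ⟨φ g⁻¹ (g • x),
    by simpa [hφ.map_one] using (hφ.map_mul g g⁻¹ (g • x)).symm,
    by simpa [hφ.map_one] using (hφ.map_mul g⁻¹ g x).symm⟩

lemma hasFiniteMulSupport_of_mem_closure (hφ : IsActionCocycle φ) {S : Set G}
    (hS : ∀ h ∈ S, (φ h).HasFiniteMulSupport) {g : G} (hg : g ∈ Subgroup.closure S) :
    (φ g).HasFiniteMulSupport := by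
  induction hg using Subgroup.closure_induction with
  | mem h hh => exact hS h hh
  | one => exact funext hφ.map_one ▸ hasFiniteMulSupport_one
  | mul h g _ _ ihh ihg =>
    rw [funext (hφ.map_mul h g)]
    exact (ihh.fun_comp_of_injective (MulAction.injective g)).mul ihg
  | inv g _ ih =>
    refine (ih.fun_comp_of_injective (MulAction.injective g⁻¹)).subset fun x hx h ↦ hx ?_
    simpa [hφ.map_one, h] using (hφ.map_mul g g⁻¹ x).symm

/-- Started at a suitable `g₀`, the walk is likely to keep forever the value of the cocycle at `x₀`,
while `b` changes that value without moving `x₀`. -/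
theorem exists_markovOp_eq_self (hφ : IsActionCocycle φ) {K : Finset G} {p : G → ℝ}
    (hp : ∀ h ∈ K, 0 < p h) (hp_sum : ∑ h ∈ K, p h = 1)
    (hgen : Subgroup.closure (K : Set G) = ⊤) (hfin : ∀ h ∈ K, (φ h).HasFiniteMulSupport)
    {x₀ : X} (hcap : HasPositiveCapacity K p x₀) {b : G} (hb : b • x₀ = x₀) (hφb : φ b x₀ ≠ 1) :
    ∃ f : G → ℝ, markovOp K p f = f ∧ |f| ≤ const G 1 ∧ ∃ g₁ g₂, f g₁ ≠ f g₂ := by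
  classical
  obtain ⟨g₀, hg₀⟩ := hcap.exists_forall_abs_sub_lt hp hp_sum hgen
    (K.finite_toSet.biUnion hfin) one_half_pos
  let u : G → ℝ := {g | φ g x₀ = φ g₀ x₀}.indicator 1
  have hu_smul (g : G) (hg : g • x₀ ∉ ⋃ h ∈ (K : Set G), mulSupport (φ h)) (h : G) (hh : h ∈ K) :
      u (h • g) = u g := by
    have : φ h (g • x₀) = 1 := by
      by_contra hne
      exact hg (mem_biUnion hh hne)
    simp [u, indicator, hφ.map_mul, this]
  obtain ⟨f, hf, hf_le, hf_close⟩ := hg₀ u (indicator_nonneg fun _ _ ↦ zero_le_one)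
    (indicator_le_self' fun _ _ ↦ zero_le_one) hu_smul
  have hu_one : u g₀ = 1 := by simp [u]
  have hu_zero : u (g₀ * b) = 0 := by
    simp [u, hφ.map_mul, hb, (hφ.isUnit g₀ x₀).mul_eq_left, hφb]
  refine ⟨f, hf, hf_le, g₀, g₀ * b, fun heq ↦ ?_⟩
  have h₁ := abs_lt.1 (hf_close g₀ rfl)
  have h₂ := abs_lt.1 (hf_close (g₀ * b) (by rw [mul_smul, hb]))
  linarith

end IsActionCocycle

end Cocycle

section SlopeJump

lemma isActionCocycle_derivWithin {G 𝕜 : Type*} [Group G] [NontriviallyNormedField 𝕜]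
    [MulAction G 𝕜] {s : 𝕜 → Set 𝕜} (hs : ∀ x, UniqueDiffWithinAt 𝕜 (s x) x)
    (hmaps : ∀ (g : G) x, MapsTo (g • ·) (s x) (s (g • x)))
    (hdiff : ∀ (g : G) x, DifferentiableWithinAt 𝕜 (g • ·) (s x) x) :
    IsActionCocycle fun (g : G) x ↦ derivWithin (g • ·) (s x) x where
  map_one x := by simpa using derivWithin_id' x (s x) (hs x)
  map_mul h g x := by
    simp only [mul_smul]
    exact derivWithin_comp x (hdiff h (g • x)) (hdiff g x) (hmaps g x)

/-- The ratio of the right and the left derivative of `f` at `x`; it detects the break points of a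
piecewise linear homeomorphism. It is meant for `f` with nonzero one-sided derivatives at `x`,
since both `derivWithin` and division have junk values. -/
def slopeJump (f : ℝ → ℝ) (x : ℝ) : ℝ := derivWithin f (Ici x) x / derivWithin f (Iic x) x

lemma slopeJump_eq_div {f : ℝ → ℝ} {x r l : ℝ} (hr : HasDerivWithinAt f r (Ici x) x)
    (hl : HasDerivWithinAt f l (Iic x) x) : slopeJump f x = r / l := by
  rw [slopeJump, hr.derivWithin (uniqueDiffWithinAt_Ici x),
    hl.derivWithin (uniqueDiffWithinAt_Iic x)]

lemma slopeJump_eq_one {f : ℝ → ℝ} {x f' : ℝ} (hf : HasDerivAt f f' x) (hf' : f' ≠ 0) :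
    slopeJump f x = 1 := by
  rw [slopeJump_eq_div hf.hasDerivWithinAt hf.hasDerivWithinAt, div_self hf']

/-- `f` has a right and a left derivative at every point. -/
def IsSemidifferentiable (f : ℝ → ℝ) : Prop :=
  ∀ x, DifferentiableWithinAt ℝ f (Ici x) x ∧ DifferentiableWithinAt ℝ f (Iic x) x

lemma IsSemidifferentiable.comp {f g : ℝ → ℝ} (hg : IsSemidifferentiable g)
    (hf : IsSemidifferentiable f) (hmono : Monotone f) : IsSemidifferentiable (g ∘ f) :=
  fun x ↦ ⟨(hg (f x)).1.comp x (hf x).1 fun _ hy ↦ hmono hy,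
    (hg (f x)).2.comp x (hf x).2 fun _ hy ↦ hmono hy⟩

lemma isActionCocycle_slopeJump {G : Type*} [Group G] [MulAction G ℝ]
    (hmono : ∀ g : G, Monotone (g • · : ℝ → ℝ))
    (hdiff : ∀ g : G, IsSemidifferentiable (g • ·)) :
    IsActionCocycle fun g : G ↦ slopeJump (g • ·) :=
  (isActionCocycle_derivWithin uniqueDiffWithinAt_Ici (fun g _ _ hy ↦ hmono g hy)
      fun g x ↦ (hdiff g x).1).div
    (isActionCocycle_derivWithin uniqueDiffWithinAt_Iic (fun g _ _ hy ↦ hmono g hy)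
      fun g x ↦ (hdiff g x).2)

/-- The monotone permutations of the line that have one-sided derivatives everywhere. -/
def monotoneSemidifferentiable : Submonoid (Equiv.Perm ℝ) where
  carrier := {f | Monotone f ∧ IsSemidifferentiable f}
  one_mem' := ⟨monotone_id, fun _ ↦ ⟨differentiableWithinAt_id, differentiableWithinAt_id⟩⟩
  mul_mem' hg hf := ⟨hg.1.comp hf.1, hg.2.comp hf.2 hf.1⟩

lemma hasDerivWithinAt_abs_sub_Ici (a : ℝ) : HasDerivWithinAt (|· - a|) 1 (Ici a) a :=
  ((hasDerivAt_id a).sub_const a).hasDerivWithinAt.congr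
    (fun _ hx ↦ abs_of_nonneg (sub_nonneg.2 hx)) (by simp)

lemma hasDerivWithinAt_abs_sub_Iic (a : ℝ) : HasDerivWithinAt (|· - a|) (-1) (Iic a) a :=
  ((hasDerivAt_id a).sub_const a).neg.hasDerivWithinAt.congr
    (fun _ hx ↦ abs_of_nonpos (sub_nonpos.2 hx)) (by simp)

lemma hasDerivAt_abs_sub {a x : ℝ} (hx : x ≠ a) :
    HasDerivAt (|· - a|) (SignType.sign (x - a) : ℝ) x := by
  simpa using (hasDerivAt_abs (sub_ne_zero.2 hx)).comp_sub_const x a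

lemma isSemidifferentiable_abs_sub (a : ℝ) : IsSemidifferentiable (|· - a|) := by
  intro x
  obtain rfl | hx := eq_or_ne x a
  · exact ⟨(hasDerivWithinAt_abs_sub_Ici x).differentiableWithinAt,
      (hasDerivWithinAt_abs_sub_Iic x).differentiableWithinAt⟩
  · have h := (hasDerivAt_abs_sub hx).differentiableAt
    exact ⟨h.differentiableWithinAt, h.differentiableWithinAt⟩

end SlopeJump

section Thompson

lemma Atil_mem_Ftil : Atil ∈ Ftil := Subgroup.subset_closure (by simp)

lemma Btil_mem_Ftil : Btil ∈ Ftil := Subgroup.subset_closure (by simp)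

/-- The summand `|x - 0|` has the form `|x - a|` of the lemmas above. -/
lemma Bfun_eq_add_abs (x : ℝ) : Bfun x = x + (|x - 2| - |x - 0| - 2) / 4 := by
  unfold Bfun
  split_ifs <;> grind

lemma Binvfun_eq_add_abs (x : ℝ) : Binvfun x = x + (|x - 0| - |x - 1| + 1) / 2 := by
  unfold Binvfun
  split_ifs <;> grind

lemma isSemidifferentiable_Bfun : IsSemidifferentiable Bfun := by
  rw [funext Bfun_eq_add_abs]
  intro x
  obtain ⟨hr₀, hl₀⟩ := isSemidifferentiable_abs_sub 0 x
  obtain ⟨hr₂, hl₂⟩ := isSemidifferentiable_abs_sub 2 x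
  exact ⟨differentiableWithinAt_id.add (((hr₂.sub hr₀).sub_const 2).div_const 4),
    differentiableWithinAt_id.add (((hl₂.sub hl₀).sub_const 2).div_const 4)⟩

lemma isSemidifferentiable_Binvfun : IsSemidifferentiable Binvfun := by
  rw [funext Binvfun_eq_add_abs]
  intro x
  obtain ⟨hr₀, hl₀⟩ := isSemidifferentiable_abs_sub 0 x
  obtain ⟨hr₁, hl₁⟩ := isSemidifferentiable_abs_sub 1 x
  exact ⟨differentiableWithinAt_id.add (((hr₀.sub hr₁).add_const 1).div_const 2),
    differentiableWithinAt_id.add (((hl₀.sub hl₁).add_const 1).div_const 2)⟩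

lemma monotone_Bfun : Monotone Bfun := by
  intro x y hxy
  unfold Bfun
  split_ifs <;> linarith

lemma monotone_Binvfun : Monotone Binvfun := by
  intro x y hxy
  unfold Binvfun
  split_ifs <;> linarith

lemma Ftil_le_monotoneSemidifferentiable : Ftil.toSubmonoid ≤ monotoneSemidifferentiable := by
  rw [Ftil, Subgroup.closure_toSubmonoid, Submonoid.closure_le, union_subset_iff, Set.inv_insert,
    Set.inv_singleton]
  simp only [insert_subset_iff, singleton_subset_iff]
  refine ⟨⟨⟨fun x y h ↦ sub_le_sub_right h 1, fun x ↦ ?_⟩,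
    monotone_Bfun, isSemidifferentiable_Bfun⟩,
    ⟨fun x y h ↦ add_le_add_left h 1, fun x ↦ ?_⟩,
    monotone_Binvfun, isSemidifferentiable_Binvfun⟩
  · exact ⟨differentiableWithinAt_id.sub_const 1, differentiableWithinAt_id.sub_const 1⟩
  · exact ⟨differentiableWithinAt_id.add_const 1, differentiableWithinAt_id.add_const 1⟩

lemma slopeJump_Bfun_zero : slopeJump Bfun 0 = 1 / 2 := by
  have h₂ := hasDerivAt_abs_sub (two_ne_zero (α := ℝ)).symm
  rw [funext Bfun_eq_add_abs]
  refine (slopeJump_eq_div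
    ((hasDerivWithinAt_id _ _).add (((h₂.hasDerivWithinAt.sub
      (hasDerivWithinAt_abs_sub_Ici 0)).sub_const 2).div_const 4))
    ((hasDerivWithinAt_id _ _).add (((h₂.hasDerivWithinAt.sub
      (hasDerivWithinAt_abs_sub_Iic 0)).sub_const 2).div_const 4))).trans ?_
  norm_num

lemma slopeJump_Bfun_eq_one {x : ℝ} (hx₀ : x ≠ 0) (hx₂ : x ≠ 2) : slopeJump Bfun x = 1 := by
  rw [funext Bfun_eq_add_abs]
  refine slopeJump_eq_one ((hasDerivAt_id x).add ((((hasDerivAt_abs_sub hx₂).sub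
    (hasDerivAt_abs_sub hx₀)).sub_const 2).div_const 4)) ?_
  cases SignType.sign (x - 2) <;> cases SignType.sign (x - 0) <;> norm_num

lemma slopeJump_Atil (x : ℝ) : slopeJump Atil x = 1 :=
  slopeJump_eq_one ((hasDerivAt_id x).sub_const 1) one_ne_zero

lemma isActionCocycle_slopeJump_Ftil : IsActionCocycle fun g : Ftil ↦ slopeJump (g • ·) :=
  isActionCocycle_slopeJump (fun g ↦ (Ftil_le_monotoneSemidifferentiable g.2).1)
    fun g ↦ (Ftil_le_monotoneSemidifferentiable g.2).2

lemma hasFiniteMulSupport_slopeJump_Ftil (g : Ftil) :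
    (slopeJump (g • ·)).HasFiniteMulSupport := by
  refine isActionCocycle_slopeJump_Ftil.hasFiniteMulSupport_of_mem_closure (fun h hh ↦ ?_)
    (Subgroup.closure_closure_coe_preimage.ge (Subgroup.mem_top g))
  refine (toFinite {0, 2}).subset fun x hx ↦ ?_
  contrapose! hx
  rw [notMem_mulSupport]
  obtain hh | hh : (h : Equiv.Perm ℝ) = Atil ∨ (h : Equiv.Perm ℝ) = Btil := hh
  · exact (congrArg (fun f : Equiv.Perm ℝ ↦ slopeJump f x) hh).trans (slopeJump_Atil x)
  · simp only [mem_insert_iff, mem_singleton_iff, not_or] at hx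
    exact (congrArg (fun f : Equiv.Perm ℝ ↦ slopeJump f x) hh).trans
      (slopeJump_Bfun_eq_one hx.1 hx.2)

lemma Bfun_eq_div_two {x : ℝ} (hx : x ∈ Ico 0 2) : Bfun x = x / 2 := by
  unfold Bfun
  split_ifs <;> grind

theorem hasPositiveCapacity_zero_Ftil {K : Finset Ftil} {p : Ftil → ℝ} (hp : ∀ h ∈ K, 0 < p h)
    (hgen : Subgroup.closure (K : Set Ftil) = ⊤) : HasPositiveCapacity K p (0 : ℝ) := by
  let a : Ftil := ⟨Atil, Atil_mem_Ftil⟩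
  let b : Ftil := ⟨Btil, Btil_mem_Ftil⟩
  have hb {x : ℝ} (hx : x ∈ Ico 0 2) : b • x = x / 2 := Bfun_eq_div_two hx
  have hc {x : ℝ} (hx : x ∈ Ico 0 2) : (a⁻¹ * b) • x = x / 2 + 1 := by
    rw [mul_smul, hb hx]
    rfl
  refine hasPositiveCapacity_of_pingPong hp hgen (b := b) (c := a⁻¹ * b) (U := Ico 0 2)
    (fun x hx ↦ ?_) (fun x hx ↦ ?_) ?_ (by simp)
  · simp only [hb hx]
    constructor <;> linarith [hx.1, hx.2]
  · simp only [hc hx]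
    constructor <;> linarith [hx.1, hx.2]
  · refine disjoint_image_image fun x hx y hy ↦ ?_
    rw [hb hx, hc hy]
    linarith [hx.2, hy.1]

end Thompson

theorem thompson_simple_random_walk_not_liouville_general (K : Finset ↥Ftil) (p : ↥Ftil → ℝ)
    (hp : ∀ h ∈ K, 0 < p h) (hp_sum : ∑ h ∈ K, p h = 1)
    (hgen : Subgroup.closure (K : Set ↥Ftil) = (⊤ : Subgroup ↥Ftil)) :
    ∃ f : ↥Ftil → ℝ,
      (∃ c : ℝ, ∀ g, |f g| ≤ c) ∧
      (∀ g : ↥Ftil, f g = ∑ h ∈ K, p h * f (h * g)) ∧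
      (∃ g₁ g₂ : ↥Ftil, f g₁ ≠ f g₂) := by
  have hcap := hasPositiveCapacity_zero_Ftil hp hgen
  let b : Ftil := ⟨Btil, Btil_mem_Ftil⟩
  have hb : b • (0 : ℝ) = 0 := (Bfun_eq_div_two (by simp)).trans (zero_div 2)
  have hjump : slopeJump (b • ·) 0 ≠ 1 := slopeJump_Bfun_zero.trans_ne (by norm_num)
  obtain ⟨f, hf, hf_le, hf_ne⟩ := isActionCocycle_slopeJump_Ftil.exists_markovOp_eq_self hp hp_sum
    hgen (fun h _ ↦ hasFiniteMulSupport_slopeJump_Ftil h) hcap hb hjump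
  exact ⟨f, ⟨1, hf_le⟩, fun g ↦ (congrFun hf.symm g).trans (markovOp_apply f g), hf_ne⟩

/-- The simple random walk on the Cayley graph of Thompson's group `F̃` determined by any finite
symmetric generating set `K` is not Liouville: there is a bounded non-constant `μ_K`-harmonic
function, where `μ_K` is the uniform measure on `K`.  Harmonicity `f(g) = ∑_{h∈K} |K|⁻¹ f(g·h)`
is expressed with the paper's product `g·h = h * g`. -/
theorem thompson_simple_random_walk_not_liouville (K : Finset ↥Ftil)
    (hne : K.Nonempty)
    (hsym : ∀ g ∈ K, g⁻¹ ∈ K)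
    (hgen : Subgroup.closure (K : Set ↥Ftil) = (⊤ : Subgroup ↥Ftil)) :
    ∃ f : ↥Ftil → ℝ,
      (∃ c : ℝ, ∀ g, |f g| ≤ c) ∧
      (∀ g : ↥Ftil, f g = (K.card : ℝ)⁻¹ * ∑ h ∈ K, f (h * g)) ∧
      (∃ g₁ g₂ : ↥Ftil, f g₁ ≠ f g₂) := by
  have hsum : ∑ _ ∈ K, (K.card : ℝ)⁻¹ = 1 := by simp [hne.ne_empty]
  simpa only [Finset.mul_sum] using thompson_simple_random_walk_not_liouville_general K
    (fun _ ↦ (K.card : ℝ)⁻¹) (fun _ _ ↦ inv_pos.2 (Nat.cast_pos.2 hne.card_pos)) hsum hgen
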